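/- A slipface s is submodular if and only if there exists a permutation α ∈ ASP such that s = s_α. Consequently, the map α ↦ s_α is a bijection from ASP onto the set of submodular slipfaces. -/

import Mathlib

/-!
Both directions rest on first differences.  For `α ∈ ASP`,

* `s_α(a,b) - s_α(a,b+1)` is the indicator of `α b < a` (`sF_row`),
* `s_α(a+1,b) - s_α(a,b)` is the indicator of `b ≤ α⁻¹ a` (`sF_col`).

These give (S1), submodularity, and injectivity of `α ↦ s_α`, since the row differences recover
`α`.  Applied to both `α` and `α⁻¹` they also give
`s_α(a,b) - s_{α⁻¹}(b,a) = χ_α + a - b` (`sF_sub_inv`).  Hence (S2) holds, with equality as soon as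
`s_α(a,b)` or `s_{α⁻¹}(b,a)` vanishes, and along a line one of the two vanishes outside a bounded
interval; this is (S3).

Conversely, let `s` be a submodular slipface.  For fixed `b` the difference `s(a,b) - s(a,b+1)` is
`0` or `1`, is monotone in `a` by submodularity, and by (S3) is `0` for `a ≪ 0` and `1` for
`a ≫ 0`; let `f b` be the place where it jumps.  Likewise `s(a+1,b) - s(a,b)` drops from `1` to `0`
once as `b` grows, at a place `g a`.  Both `f b = a` and `g a = b` say that the mixed second
difference of `s` at `(a,b)` equals `1`, so `f` and `g` are mutually inverse.  The resulting
permutation is almost-sign-preserving by (S3), and its slipface function agrees with `s` because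
both vanish for large `b` and have the same row differences.
-/

/-- A permutation of ℤ is almost-sign-preserving if only finitely many `n` have
exactly one of `n`, `α n` negative. -/
def ASP (α : Equiv.Perm ℤ) : Prop := {n : ℤ | Xor' (n < 0) (α n < 0)}.Finite

/-- The slipface function `s_α(a,b) = #{n ≥ b : α n < a}`. -/
noncomputable def sF (α : Equiv.Perm ℤ) : ℤ → ℤ → ℕ :=
  fun a b => {n : ℤ | b ≤ n ∧ α n < a}.ncard

/-- The shift `χ_α = s_α(0,0) - s_{α⁻¹}(0,0)`. -/
noncomputable def shiftASP (α : Equiv.Perm ℤ) : ℤ :=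
  (sF α 0 0 : ℤ) - (sF α⁻¹ 0 0 : ℤ)

/-- Bruhat order on ASP: pointwise comparison of slipface functions. -/
def BruhatLE (α β : Equiv.Perm ℤ) : Prop := ∀ a b : ℤ, sF α a b ≤ sF β a b

/-- `α ≤_χ β`: Bruhat order together with equality of shifts. -/
def BruhatLEchi (α β : Equiv.Perm ℤ) : Prop := BruhatLE α β ∧ shiftASP α = shiftASP β

/-- `γ` is the Demazure product `α ⋆ β`:
`s_γ(a,b) = min_{ℓ} [s_α(a,ℓ) + s_β(ℓ,b)]`. -/
def IsDem (α β γ : Equiv.Perm ℤ) : Prop :=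
  ∀ a b : ℤ, IsLeast {x : ℕ | ∃ ℓ : ℤ, x = sF α a ℓ + sF β ℓ b} (sF γ a b)

/-- `γ = α ◁ β`: `s_γ(a,b) = max_ℓ [s_α(a,ℓ) - s_{β⁻¹}(b,ℓ)]`. -/
def IsTriL (α β γ : Equiv.Perm ℤ) : Prop :=
  ∀ a b : ℤ, IsGreatest {x : ℤ | ∃ ℓ : ℤ, x = (sF α a ℓ : ℤ) - (sF β⁻¹ b ℓ : ℤ)}
    ((sF γ a b : ℤ))

/-- `γ = α ▷ β`: `s_γ(a,b) = max_ℓ [s_β(ℓ,b) - s_{α⁻¹}(ℓ,a)]`. -/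
def IsTriR (α β γ : Equiv.Perm ℤ) : Prop :=
  ∀ a b : ℤ, IsGreatest {x : ℤ | ∃ ℓ : ℤ, x = (sF β ℓ b : ℤ) - (sF α⁻¹ ℓ a : ℤ)}
    ((sF γ a b : ℤ))

/-- The set of inversions of a permutation. -/
def InvSet (α : Equiv.Perm ℤ) : Set (ℤ × ℤ) := {p : ℤ × ℤ | p.1 < p.2 ∧ α p.2 < α p.1}

/-- A slipface function of shift `χ`: conditions (S1), (S2), (S3). -/
def IsSlipfaceOf (χ : ℤ) (s : ℤ → ℤ → ℕ) : Prop :=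
  (∀ a b : ℤ, (s a b ≤ s (a + 1) b ∧ s (a + 1) b ≤ s a b + 1) ∧
              (s a (b + 1) ≤ s a b ∧ s a b ≤ s a (b + 1) + 1)) ∧
  (∀ a b : ℤ, max 0 (χ + a - b) ≤ (s a b : ℤ)) ∧
  (∀ b : ℤ, {a : ℤ | (s a b : ℤ) ≠ max 0 (χ + a - b)}.Finite) ∧
  (∀ a : ℤ, {b : ℤ | (s a b : ℤ) ≠ max 0 (χ + a - b)}.Finite)

/-- A slipface is a slipface of some shift. -/
def IsSlipface (s : ℤ → ℤ → ℕ) : Prop := ∃ χ : ℤ, IsSlipfaceOf χ s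

/-- Submodularity: `s(a+1,b) - s(a,b) - s(a+1,b+1) + s(a,b+1) ≥ 0`. -/
def SubmodularSF (s : ℤ → ℤ → ℕ) : Prop :=
  ∀ a b : ℤ, s a b + s (a + 1) (b + 1) ≤ s (a + 1) b + s a (b + 1)

/-- The dual slipface: `s^∨(b,a) = s(a,b) - (χ + a - b)` (for `s` of shift `χ`). -/
def dualSF (χ : ℤ) (s : ℤ → ℤ → ℕ) : ℤ → ℤ → ℤ :=
  fun b a => (s a b : ℤ) - (χ + a - b)

/-- `u = s ⋆ t`: `u(a,b) = min_ℓ [s(a,ℓ) + t(ℓ,b)]`. -/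
def IsStarSF (s t u : ℤ → ℤ → ℕ) : Prop :=
  ∀ a b : ℤ, IsLeast {x : ℕ | ∃ ℓ : ℤ, x = s a ℓ + t ℓ b} (u a b)

/-- The set of values `s(a,ℓ) - t^∨(b,ℓ)` whose maximum defines `(s ◁ t)(a,b)`,
where `χt` is the shift of `t`. -/
def TriLSet (χt : ℤ) (s t : ℤ → ℤ → ℕ) (a b : ℤ) : Set ℤ :=
  {x : ℤ | ∃ ℓ : ℤ, x = (s a ℓ : ℤ) - dualSF χt t b ℓ}

/-- `u = s ◁ t`: `u(a,b) = max_ℓ [s(a,ℓ) - t^∨(b,ℓ)]` (`χt` the shift of `t`). -/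
def IsTriLSF (χt : ℤ) (s t u : ℤ → ℤ → ℕ) : Prop :=
  ∀ a b : ℤ, IsGreatest (TriLSet χt s t a b) ((u a b : ℤ))

/-- The set of values `t(ℓ,b) - s^∨(ℓ,a)` whose maximum defines `(s ▷ t)(a,b)`,
where `χs` is the shift of `s`. -/
def TriRSet (χs : ℤ) (s t : ℤ → ℤ → ℕ) (a b : ℤ) : Set ℤ :=
  {x : ℤ | ∃ ℓ : ℤ, x = (t ℓ b : ℤ) - dualSF χs s ℓ a}

/-- `u = s ▷ t`: `u(a,b) = max_ℓ [t(ℓ,b) - s^∨(ℓ,a)]` (`χs` the shift of `s`). -/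
def IsTriRSF (χs : ℤ) (s t u : ℤ → ℤ → ℕ) : Prop :=
  ∀ a b : ℤ, IsGreatest (TriRSet χs s t a b) ((u a b : ℤ))

/-- Pointwise (Bruhat) order on slipface functions. -/
def PLE (s t : ℤ → ℤ → ℕ) : Prop := ∀ a b : ℤ, s a b ≤ t a b

/-! ### Slipface functions of permutations -/

lemma ASP_iff {α : Equiv.Perm ℤ} :
    ASP α ↔ {n : ℤ | (n < 0 ∧ ¬ α n < 0) ∨ (α n < 0 ∧ ¬ n < 0)}.Finite := Iff.rfl

lemma ASP.finite {α : Equiv.Perm ℤ} (h : ASP α) (a b : ℤ) :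
    {n : ℤ | b ≤ n ∧ α n < a}.Finite := by
  have h1 : (α ⁻¹' Set.Ico 0 a).Finite :=
    (Set.finite_Ico 0 a).preimage α.injective.injOn
  refine (((ASP_iff.1 h).union (Set.finite_Ico b 0)).union h1).subset ?_
  intro n hn
  simp only [Set.mem_union, Set.mem_ofPred_eq, Set.mem_Ico, Set.mem_preimage] at hn ⊢
  omega

lemma ASP.inv {α : Equiv.Perm ℤ} (h : ASP α) : ASP α⁻¹ := by
  refine ASP_iff.2 (((ASP_iff.1 h).image α).subset fun n hn => ⟨α⁻¹ n, ?_, by simp⟩)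
  simp only [Set.mem_ofPred_eq, α.apply_symm_apply, Equiv.Perm.inv_def] at hn ⊢
  tauto

lemma sF_row {α : Equiv.Perm ℤ} (h : ASP α) (a b : ℤ) :
    sF α a b = sF α a (b + 1) + if α b < a then 1 else 0 := by
  unfold sF
  split_ifs with hb
  · rw [← Set.ncard_insert_of_notMem (a := b) (by simp) (h.finite a (b + 1))]
    congr 1
    ext n
    simp only [Set.mem_insert_iff, Set.mem_ofPred_eq]
    constructor
    · rintro ⟨h1, h2⟩
      by_cases hn : n = b
      · exact Or.inl hn
      · exact Or.inr ⟨by omega, h2⟩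
    · rintro (rfl | ⟨h1, h2⟩)
      · exact ⟨le_rfl, hb⟩
      · exact ⟨by omega, h2⟩
  · rw [add_zero]
    congr 1
    ext n
    simp only [Set.mem_ofPred_eq]
    constructor
    · rintro ⟨h1, h2⟩
      have hn : n ≠ b := by rintro rfl; exact hb h2
      exact ⟨by omega, h2⟩
    · rintro ⟨h1, h2⟩
      exact ⟨by omega, h2⟩

lemma sF_col {α : Equiv.Perm ℤ} (h : ASP α) (a b : ℤ) :
    sF α (a + 1) b = sF α a b + if b ≤ α⁻¹ a then 1 else 0 := by
  unfold sF
  have key : ∀ n, α n = a ↔ n = α⁻¹ a := fun n => by rw [Equiv.Perm.eq_inv_iff_eq]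
  split_ifs with hb
  · rw [← Set.ncard_insert_of_notMem (a := α⁻¹ a) (by simp) (h.finite a b)]
    congr 1
    ext n
    simp only [Set.mem_insert_iff, Set.mem_ofPred_eq, ← key]
    constructor
    · rintro ⟨h1, h2⟩
      omega
    · rintro (h1 | ⟨h1, h2⟩)
      · have := (key n).1 h1
        exact ⟨by omega, by omega⟩
      · exact ⟨h1, by omega⟩
  · rw [add_zero]
    congr 1
    ext n
    simp only [Set.mem_ofPred_eq]
    constructor
    · rintro ⟨h1, h2⟩
      have hn : α n ≠ a := fun hn => hb ((key n).1 hn ▸ h1)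
      exact ⟨h1, by omega⟩
    · rintro ⟨h1, h2⟩
      exact ⟨h1, by omega⟩

/-- Along each coordinate the increments of `s_α(a,b)` and `s_{α⁻¹}(b,a)` are indicators of
complementary conditions, so their difference is affine; its value at the origin is `χ_α`. -/
lemma sF_sub_inv {α : Equiv.Perm ℤ} (h : ASP α) (a b : ℤ) :
    (sF α a b : ℤ) - sF α⁻¹ b a = shiftASP α + a - b := by
  have hA : ∀ a b : ℤ, (sF α (a + 1) b : ℤ) - sF α⁻¹ b (a + 1) = sF α a b - sF α⁻¹ b a + 1 := by
    intro a b
    rw [sF_col h a b, sF_row h.inv b a]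
    split_ifs <;> omega
  have hB : ∀ a b : ℤ, (sF α a (b + 1) : ℤ) - sF α⁻¹ (b + 1) a = sF α a b - sF α⁻¹ b a - 1 := by
    intro a b
    rw [sF_row h a b, sF_col h.inv b a, inv_inv]
    split_ifs <;> omega
  have h0 : ∀ a : ℤ, (sF α a 0 : ℤ) - sF α⁻¹ 0 a = shiftASP α + a := by
    intro a
    induction a using Int.induction_on with
    | zero => simp [shiftASP]
    | succ i ih => have := hA i 0; omega
    | pred i ih => have := hA (-i - 1) 0; rw [sub_add_cancel] at this; omega
  induction b using Int.induction_on with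
  | zero => have := h0 a; omega
  | succ i ih => have := hB a i; omega
  | pred i ih => have := hB a (-i - 1); rw [sub_add_cancel] at this; omega

lemma sF_zero_of_le {α : Equiv.Perm ℤ} (h : ASP α) (b : ℤ) : ∃ A, ∀ a ≤ A, sF α a b = 0 := by
  obtain ⟨L, hL⟩ := ((h.finite 0 b).image α).bddBelow
  refine ⟨min L 0, fun a ha => ?_⟩
  have : {n : ℤ | b ≤ n ∧ α n < a} = ∅ := by
    ext n
    simp only [Set.mem_ofPred_eq, Set.mem_empty_iff_false, iff_false, not_and, not_lt]
    intro hn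
    by_contra hlt
    have := hL ⟨n, ⟨hn, by omega⟩, rfl⟩
    omega
  simp [sF, this]

lemma sF_zero_of_ge {α : Equiv.Perm ℤ} (h : ASP α) (a : ℤ) : ∃ B, ∀ b ≥ B, sF α a b = 0 := by
  obtain ⟨U, hU⟩ := (h.finite a 0).bddAbove
  refine ⟨max (U + 1) 0, fun b hb => ?_⟩
  have : {n : ℤ | b ≤ n ∧ α n < a} = ∅ := by
    ext n
    simp only [Set.mem_ofPred_eq, Set.mem_empty_iff_false, iff_false, not_and]
    intro hn hlt
    have := hU (show n ∈ {n : ℤ | 0 ≤ n ∧ α n < a} from ⟨by omega, hlt⟩)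
    omega
  simp [sF, this]

lemma isSlipface_sF {α : Equiv.Perm ℤ} (h : ASP α) : IsSlipface (sF α) := by
  refine ⟨shiftASP α, fun a b => ?_, fun a b => ?_, fun b => ?_, fun a => ?_⟩
  · have h1 := sF_row h a b
    have h2 := sF_col h a b
    split_ifs at h1 h2 <;> omega
  · have := sF_sub_inv h a b
    omega
  · obtain ⟨A, hA⟩ := sF_zero_of_le h b
    obtain ⟨A', hA'⟩ := sF_zero_of_ge h.inv b
    refine (Set.finite_Icc A A').subset fun a ha => ?_
    have hs := sF_sub_inv h a b
    have h1 := hA a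
    have h2 := hA' a
    simp only [Set.mem_ofPred_eq, Set.mem_Icc] at ha ⊢
    omega
  · obtain ⟨B, hB⟩ := sF_zero_of_ge h a
    obtain ⟨B', hB'⟩ := sF_zero_of_le h.inv a
    refine (Set.finite_Icc B' B).subset fun b hb => ?_
    have hs := sF_sub_inv h a b
    have h1 := hB b
    have h2 := hB' b
    simp only [Set.mem_ofPred_eq, Set.mem_Icc] at hb ⊢
    omega

lemma submodular_sF {α : Equiv.Perm ℤ} (h : ASP α) : SubmodularSF (sF α) := by
  intro a b
  have h1 := sF_row h a b
  have h2 := sF_row h (a + 1) b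
  split_ifs at h1 h2 <;> omega

lemma sF_injOn : Set.InjOn sF {α : Equiv.Perm ℤ | ASP α} := by
  intro α hα β hβ hs
  have key : ∀ a b : ℤ, α b < a ↔ β b < a := by
    intro a b
    have h1 := sF_row hα a b
    have h2 := sF_row hβ a b
    rw [hs] at h1
    split_ifs at h1 h2 <;> omega
  ext b
  have h1 := key (α b + 1) b
  have h2 := key (β b + 1) b
  omega

/-! ### The permutation of a submodular slipface -/

/-- A monotone predicate on `ℤ` that is neither always true nor always false has a threshold. -/
lemma exists_threshold {P : ℤ → Prop} (hstep : ∀ a, P a → P (a + 1)) (h0 : ∃ A, ∀ a ≤ A, ¬ P a)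
    (h1 : ∃ A, P A) : ∃ k, ∀ a, P a ↔ k < a := by
  have hmono : ∀ a, P a → ∀ c, a ≤ c → P c := fun a ha c hc => by
    induction c, hc using Int.leInduction with
    | base => exact ha
    | succ c _ ih => exact hstep c ih
  obtain ⟨A, hA⟩ := h0
  obtain ⟨m, hm, hmin⟩ := Int.exists_least_of_bdd (P := P)
    ⟨A, fun z hz => by by_contra hlt; exact hA z (by omega) hz⟩ h1
  exact ⟨m - 1, fun a => ⟨fun ha => by have := hmin a ha; omega,
    fun ha => hmono m hm a (by omega)⟩⟩

lemma eventually_of_finite {p : ℤ → Prop} (h : {a | ¬ p a}.Finite) :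
    ∃ L U, (∀ a ≤ L, p a) ∧ ∀ a ≥ U, p a := by
  obtain ⟨L, hL⟩ := h.bddBelow
  obtain ⟨U, hU⟩ := h.bddAbove
  refine ⟨L - 1, U + 1, fun a ha => ?_, fun a ha => ?_⟩
  · by_contra hp
    have := hL hp
    omega
  · by_contra hp
    have := hU hp
    omega

lemma exists_perm {s : ℤ → ℤ → ℕ} (hs : IsSlipface s) (hsub : SubmodularSF s) :
    ∃ α : Equiv.Perm ℤ, ASP α ∧ s = sF α := by
  obtain ⟨χ, hS1, -, hS3, hS3'⟩ := hs
  have ev : ∀ b, ∃ L U, (∀ a ≤ L, (s a b : ℤ) = max 0 (χ + a - b)) ∧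
      ∀ a ≥ U, (s a b : ℤ) = max 0 (χ + a - b) := fun b => eventually_of_finite (hS3 b)
  have ev' : ∀ a, ∃ L U, (∀ b ≤ L, (s a b : ℤ) = max 0 (χ + a - b)) ∧
      ∀ b ≥ U, (s a b : ℤ) = max 0 (χ + a - b) := fun a => eventually_of_finite (hS3' a)
  have hf : ∀ b, ∃ k, ∀ a, s a b = s a (b + 1) + 1 ↔ k < a := by
    intro b
    obtain ⟨L, U, hL, hU⟩ := ev b
    obtain ⟨L', U', hL', hU'⟩ := ev (b + 1)
    apply exists_threshold
    · intro a ha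
      have h1 := hsub a b
      have h2 := hS1 (a + 1) b
      omega
    · refine ⟨min (min L L') (b - χ), fun a ha => ?_⟩
      have h1 := hL a (by omega)
      have h2 := hL' a (by omega)
      omega
    · refine ⟨max (max U U') (b + 1 - χ), ?_⟩
      have h1 := hU _ (le_trans (le_max_left U U') (le_max_left _ (b + 1 - χ)))
      have h2 := hU' _ (le_trans (le_max_right U U') (le_max_left _ (b + 1 - χ)))
      omega
  have hg : ∀ a, ∃ k, ∀ b, s (a + 1) b = s a b ↔ k < b := by
    intro a
    obtain ⟨L, U, hL, hU⟩ := ev' a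
    obtain ⟨L', U', hL', hU'⟩ := ev' (a + 1)
    apply exists_threshold
    · intro b hb
      have h1 := hsub a b
      have h2 := hS1 a (b + 1)
      omega
    · refine ⟨min (min L L') (χ + a), fun b hb => ?_⟩
      have h1 := hL b (by omega)
      have h2 := hL' b (by omega)
      omega
    · refine ⟨max (max U U') (χ + a + 1), ?_⟩
      have h1 := hU _ (le_trans (le_max_left U U') (le_max_left _ (χ + a + 1)))
      have h2 := hU' _ (le_trans (le_max_right U U') (le_max_left _ (χ + a + 1)))
      omega
  choose f hf using hf
  choose g hg using hg
  -- Either equation says that the mixed second difference of `s` at `(a,b)` equals `1`.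
  have hfg : ∀ a b, f b = a ↔ g a = b := by
    intro a b
    have h1 := hf b a
    have h2 := hf b (a + 1)
    have h3 := hg a b
    have h4 := hg a (b + 1)
    have h5 := hS1 a b
    have h6 := hS1 (a + 1) b
    have h7 := hS1 a (b + 1)
    constructor <;> intro h <;> omega
  let α : Equiv.Perm ℤ := ⟨f, g, fun b => (hfg _ b).1 rfl, fun a => (hfg a _).2 rfl⟩
  have hα : ∀ b a, s a b = s a (b + 1) + 1 ↔ α b < a := hf
  have hASP : ASP α := by
    rw [ASP_iff]
    obtain ⟨L, U, hL, hU⟩ := ev' 0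
    -- Outside this interval `s 0 b` and `s 0 (b + 1)` take their asymptotic values, which decide
    -- the sign of `α b`.
    refine (Set.finite_Icc (min (min L χ) 0 - 1) (max (max U χ) 0)).subset fun b hb => ?_
    simp only [Set.mem_ofPred_eq, Set.mem_Icc] at hb ⊢
    have h1 := hα b 0
    by_contra hout
    by_cases hlow : b < min (min L χ) 0 - 1
    · have h2 := hL b (by omega)
      have h3 := hL (b + 1) (by omega)
      omega
    · have h2 := hU b (by omega)
      have h3 := hU (b + 1) (by omega)
      omega
  refine ⟨α, hASP, ?_⟩
  funext a b
  obtain ⟨L, U, hL, hU⟩ := ev' a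
  obtain ⟨B, hB⟩ := sF_zero_of_ge hASP a
  have hbase : ∀ b ≥ max (max U (χ + a)) B, s a b = sF α a b := by
    intro b hb
    have h1 := hU b (by omega)
    have h2 := hB b (by omega)
    omega
  rcases le_total (max (max U (χ + a)) B) b with hb | hb
  · exact hbase b hb
  · induction b, hb using Int.leInductionDown with
    | base => exact hbase _ le_rfl
    | pred b _ ih =>
      have h1 := sF_row hASP a (b - 1)
      have h2 := hα (b - 1) a
      have h3 := hS1 a (b - 1)
      rw [sub_add_cancel] at h1 h2 h3
      split_ifs at h1 with hlt
      · have := h2.2 hlt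
        omega
      · have : ¬ _ := fun h => hlt (h2.1 h)
        omega

/-- A slipface is submodular iff it equals `s_α` for some `α ∈ ASP`; consequently
`α ↦ s_α` is a bijection from ASP onto the set of submodular slipfaces. -/
theorem submodular_iff_perm :
    (∀ s : ℤ → ℤ → ℕ, IsSlipface s → (SubmodularSF s ↔ ∃ α : Equiv.Perm ℤ, ASP α ∧ s = sF α)) ∧
    Set.BijOn sF {α : Equiv.Perm ℤ | ASP α} {s : ℤ → ℤ → ℕ | IsSlipface s ∧ SubmodularSF s} := by
  refine ⟨fun s hs => ⟨exists_perm hs, ?_⟩, fun α hα => ⟨isSlipface_sF hα, submodular_sF hα⟩,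
    sF_injOn, ?_⟩
  · rintro ⟨α, hα, rfl⟩
    exact submodular_sF hα
  · rintro s ⟨hs, hsub⟩
    obtain ⟨α, hα, rfl⟩ := exists_perm hs hsub
    exact ⟨α, hα, rfl⟩
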